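/- arXiv:1208.6380 — 3 statements merged into one kernel-verified Lean document; each statement's English description precedes it below -/
import Mathlib

section
/- Let A be an n×n real symmetric positive definite matrix, L an n×m real matrix and B a p×n real matrix such that the column space of L (the range of the linear map x ↦ L x) equals the null space of the linear map x ↦ B x. Assume the matrices LᵀAL and B A⁻¹ Bᵀ are invertible. Then A L (LᵀAL)⁻¹ Lᵀ + Bᵀ (B A⁻¹ Bᵀ)⁻¹ B A⁻¹ = Iₙ, the n×n identity matrix. -/
/-!
Put `M = A⁻¹ - L (LᵀAL)⁻¹ Lᵀ - A⁻¹ Bᵀ (B A⁻¹ Bᵀ)⁻¹ B A⁻¹`, so that `A * M` is the identity minus the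
left-hand side of the claim. From `B L = 0` one gets `B M = 0` and `Lᵀ A M = 0`. The first puts
each `M v` in `ker B = range L`, say `M v = L w`; the second then gives `LᵀAL w = 0`, so `w = 0`.
Hence `M = 0`.
-/

open Matrix

/-- Complementarity of the primal and dual interface scalings:
`A L (LᵀAL)⁻¹ Lᵀ + Bᵀ (B A⁻¹ Bᵀ)⁻¹ B A⁻¹ = 1` when the column space of `L`
equals the null space of `B` and `A` is symmetric positive definite. -/
theorem stmt_0 {n m p : ℕ}
    (A : Matrix (Fin n) (Fin n) ℝ) (L : Matrix (Fin n) (Fin m) ℝ)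
    (B : Matrix (Fin p) (Fin n) ℝ)
    (hA : A.PosDef)
    (hrange : LinearMap.range L.mulVecLin = LinearMap.ker B.mulVecLin)
    (hLAL : IsUnit (Lᵀ * A * L).det)
    (hBAB : IsUnit (B * A⁻¹ * Bᵀ).det) :
    A * L * (Lᵀ * A * L)⁻¹ * Lᵀ + Bᵀ * (B * A⁻¹ * Bᵀ)⁻¹ * B * A⁻¹ = 1 := by
  have hAdet : IsUnit A.det := hA.det_pos.ne'.isUnit
  have hBL : B * L = 0 := by
    apply Matrix.ext_of_mulVec_single
    intro i
    have h : L *ᵥ Pi.single i 1 ∈ LinearMap.ker B.mulVecLin :=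
      hrange ▸ ⟨Pi.single i 1, rfl⟩
    rw [← mulVec_mulVec, zero_mulVec]
    exact h
  have hLB : Lᵀ * Bᵀ = 0 := by rw [← transpose_mul, hBL, transpose_zero]
  obtain ⟨M, hM⟩ : ∃ M, M = A⁻¹ - L * ((Lᵀ * A * L)⁻¹ * Lᵀ)
      - A⁻¹ * Bᵀ * ((B * A⁻¹ * Bᵀ)⁻¹ * (B * A⁻¹)) := ⟨_, rfl⟩
  have hBM : B * M = 0 := by
    rw [hM, Matrix.mul_sub, Matrix.mul_sub, ← Matrix.mul_assoc B L, hBL, Matrix.zero_mul,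
      ← Matrix.mul_assoc B (A⁻¹ * Bᵀ), ← Matrix.mul_assoc B A⁻¹,
      mul_nonsing_inv_cancel_left _ _ hBAB, sub_zero, sub_self]
  have hLAM : Lᵀ * A * M = 0 := by
    rw [hM, Matrix.mul_sub, Matrix.mul_sub, mul_nonsing_inv_cancel_right _ _ hAdet,
      ← Matrix.mul_assoc (Lᵀ * A) L, mul_nonsing_inv_cancel_left _ _ hLAL,
      ← Matrix.mul_assoc (Lᵀ * A) (A⁻¹ * Bᵀ), ← Matrix.mul_assoc (Lᵀ * A) A⁻¹,
      mul_nonsing_inv_cancel_right _ _ hAdet, hLB, Matrix.zero_mul, sub_self, sub_zero]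
  have hM0 : M = 0 := by
    apply Matrix.ext_of_mulVec_single
    intro i
    have hker : M *ᵥ Pi.single i 1 ∈ LinearMap.ker B.mulVecLin := by
      rw [LinearMap.mem_ker, mulVecLin_apply, mulVec_mulVec, hBM, zero_mulVec]
    obtain ⟨w, hw⟩ := hrange ▸ hker
    rw [mulVecLin_apply] at hw
    have hLALw : (Lᵀ * A * L) *ᵥ w = 0 := by
      rw [← mulVec_mulVec, hw, mulVec_mulVec, hLAM, zero_mulVec]
    have hw0 : w = 0 := by
      rw [← one_mulVec w, ← nonsing_inv_mul _ hLAL, ← mulVec_mulVec, hLALw, mulVec_zero]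
    rw [← hw, hw0, mulVec_zero, zero_mulVec]
  have hAM : A * M = 1 - A * L * (Lᵀ * A * L)⁻¹ * Lᵀ
      - Bᵀ * (B * A⁻¹ * Bᵀ)⁻¹ * B * A⁻¹ := by
    rw [hM, Matrix.mul_sub, Matrix.mul_sub, mul_nonsing_inv _ hAdet, Matrix.mul_assoc A⁻¹ Bᵀ,
      mul_nonsing_inv_cancel_left _ _ hAdet]
    simp only [Matrix.mul_assoc]
  rw [hM0, Matrix.mul_zero, sub_sub] at hAM
  exact (sub_eq_zero.mp hAM.symm).symm
end

section
/- Let A be an n×n real symmetric positive definite matrix, L an n×m real matrix and B a p×n real matrix such that the range of the linear map x ↦ L x equals the kernel of the linear map x ↦ B x, and assume LᵀAL and B A⁻¹ Bᵀ are invertible. Then for every vector f ∈ ℝⁿ, the split force A L (LᵀAL)⁻¹ (Lᵀ f) is equal to f − Bᵀ (B A⁻¹ Bᵀ)⁻¹ B A⁻¹ f. -/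
/-!
Write `g = f - Bᵀ (B A⁻¹ Bᵀ)⁻¹ B A⁻¹ f`. Then `B A⁻¹ g = 0`, so `A⁻¹ g` lies in
`ker B = range L`, that is, `g = A L x` for some `x`. Since `B L = 0`, also `Lᵀ Bᵀ = 0`, hence
`Lᵀ f = Lᵀ g = (Lᵀ A L) x`; solving for `x` gives `g = A L (Lᵀ A L)⁻¹ Lᵀ f`.
-/

open Matrix

/-- The standard FETI force splitting `f̃ = A L (LᵀAL)⁻¹ (Lᵀ f)` equals the addition of
a particular set of equilibrated interface forces:
`f̃ = f − Bᵀ (B A⁻¹ Bᵀ)⁻¹ B A⁻¹ f`. -/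
theorem stmt_3 {n m p : ℕ}
    (A : Matrix (Fin n) (Fin n) ℝ) (L : Matrix (Fin n) (Fin m) ℝ)
    (B : Matrix (Fin p) (Fin n) ℝ)
    (hA : A.PosDef)
    (hrange : LinearMap.range L.mulVecLin = LinearMap.ker B.mulVecLin)
    (hLAL : IsUnit (Lᵀ * A * L).det)
    (hBAB : IsUnit (B * A⁻¹ * Bᵀ).det) :
    ∀ f : Fin n → ℝ,
      (A * L * (Lᵀ * A * L)⁻¹).mulVec (Lᵀ.mulVec f)
        = f - (Bᵀ * (B * A⁻¹ * Bᵀ)⁻¹ * B * A⁻¹).mulVec f := by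
  intro f
  have hAu : IsUnit A.det := (Matrix.isUnit_iff_isUnit_det A).1 hA.isUnit
  have hBL : B * L = 0 := by
    apply Matrix.ext_of_mulVec_single
    intro i
    have h : L *ᵥ Pi.single i 1 ∈ LinearMap.ker B.mulVecLin :=
      hrange ▸ LinearMap.mem_range_self L.mulVecLin _
    simpa only [Matrix.mulVec_mulVec, Matrix.zero_mulVec] using
      (show B *ᵥ (L *ᵥ Pi.single i 1) = 0 from h)
  have hLB : Lᵀ * Bᵀ = 0 := by rw [← Matrix.transpose_mul, hBL, Matrix.transpose_zero]
  set g := f - (Bᵀ * (B * A⁻¹ * Bᵀ)⁻¹ * B * A⁻¹) *ᵥ f with hg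
  have hker : A⁻¹ *ᵥ g ∈ LinearMap.ker B.mulVecLin := by
    have h : B * A⁻¹ * (Bᵀ * (B * A⁻¹ * Bᵀ)⁻¹ * B * A⁻¹) = B * A⁻¹ := by
      calc _ = (B * A⁻¹ * Bᵀ) * (B * A⁻¹ * Bᵀ)⁻¹ * (B * A⁻¹) := by
            simp only [Matrix.mul_assoc]
        _ = _ := by rw [Matrix.mul_nonsing_inv _ hBAB, Matrix.one_mul]
    rw [LinearMap.mem_ker, Matrix.mulVecLin_apply, Matrix.mulVec_mulVec, hg,
      Matrix.mulVec_sub, Matrix.mulVec_mulVec, h, sub_self]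
  rw [← hrange] at hker
  obtain ⟨x, hx⟩ := hker
  rw [Matrix.mulVecLin_apply] at hx
  have hgx : g = (A * L) *ᵥ x := by
    rw [← Matrix.mulVec_mulVec, hx, Matrix.mulVec_mulVec, Matrix.mul_nonsing_inv _ hAu,
      Matrix.one_mulVec]
  -- The correction term lies in the range of `Bᵀ`, which `Lᵀ` annihilates.
  have hLg : Lᵀ *ᵥ f = Lᵀ *ᵥ g := by
    rw [hg, Matrix.mulVec_sub, Matrix.mulVec_mulVec]
    simp only [← Matrix.mul_assoc, hLB, Matrix.zero_mul, Matrix.zero_mulVec, sub_zero]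
  rw [hLg, hgx, Matrix.mulVec_mulVec, Matrix.mulVec_mulVec, Matrix.mul_assoc _ Lᵀ (A * L),
    ← Matrix.mul_assoc Lᵀ A L, Matrix.mul_assoc (A * L), Matrix.nonsing_inv_mul _ hLAL,
    Matrix.mul_one]
end

section
/- Let F be an n×n real matrix, G an n×k real matrix, Q an n×n real symmetric matrix with GᵀQG invertible, and let P = Iₙ − Q G (GᵀQG)⁻¹ Gᵀ. Let d ∈ ℝⁿ, e ∈ ℝᵏ, and let λ₀ ∈ ℝⁿ satisfy Gᵀ λ₀ = e. If λ̄ ∈ ℝⁿ satisfies the projected equation Pᵀ F P λ̄ = Pᵀ (d − F λ₀), then λ = P λ̄ + λ₀ satisfies Gᵀ λ = e and there exists α ∈ ℝᵏ such that F λ + G α = d; that is, (λ, α) solves the dual interface problem. -/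
/-!
The columns of `P = 1 - Q G (Gᵀ Q G)⁻¹ Gᵀ` lie in the kernel of `Gᵀ`, so adding `P λ̄` to `λ₀`
preserves the constraint `Gᵀ λ = e`. The projected equation says that the residual `r = d - F λ`
is killed by `Pᵀ = 1 - G (Q G (Gᵀ Q G)⁻¹)ᵀ`, so `r = G α` with `α = (Q G (Gᵀ Q G)⁻¹)ᵀ r`.
-/

open Matrix

/-- A solution of the projected interface equation `Pᵀ F P λ̄ = Pᵀ (d − F λ₀)` yields,
via `λ = P λ̄ + λ₀`, a solution of the dual interface saddle-point problem. -/
theorem stmt_11 {n k : ℕ}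
    (F : Matrix (Fin n) (Fin n) ℝ) (G : Matrix (Fin n) (Fin k) ℝ)
    (Q : Matrix (Fin n) (Fin n) ℝ)
    (hQ : Q.IsSymm)
    (hGQG : IsUnit (Gᵀ * Q * G).det)
    (d : Fin n → ℝ) (e : Fin k → ℝ)
    (lam₀ : Fin n → ℝ) (hlam₀ : Gᵀ.mulVec lam₀ = e)
    (lamBar : Fin n → ℝ)
    (hproj : ((1 - Q * G * (Gᵀ * Q * G)⁻¹ * Gᵀ)ᵀ * F
          * (1 - Q * G * (Gᵀ * Q * G)⁻¹ * Gᵀ)).mulVec lamBar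
        = (1 - Q * G * (Gᵀ * Q * G)⁻¹ * Gᵀ)ᵀ.mulVec
            (d - F.mulVec lam₀)) :
    Gᵀ.mulVec ((1 - Q * G * (Gᵀ * Q * G)⁻¹ * Gᵀ).mulVec lamBar + lam₀) = e ∧
    ∃ α : Fin k → ℝ,
      F.mulVec ((1 - Q * G * (Gᵀ * Q * G)⁻¹ * Gᵀ).mulVec lamBar + lam₀)
        + G.mulVec α = d := by
  have hGP : Gᵀ * (1 - Q * G * (Gᵀ * Q * G)⁻¹ * Gᵀ) = 0 := by
    have h : Gᵀ * (Q * G * (Gᵀ * Q * G)⁻¹ * Gᵀ)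
        = (Gᵀ * Q * G) * (Gᵀ * Q * G)⁻¹ * Gᵀ := by
      simp only [Matrix.mul_assoc]
    rw [Matrix.mul_sub, Matrix.mul_one, h, Matrix.mul_nonsing_inv _ hGQG, Matrix.one_mul,
      sub_self]
  have hPT : (1 - Q * G * (Gᵀ * Q * G)⁻¹ * Gᵀ)ᵀ
      = 1 - G * (Q * G * (Gᵀ * Q * G)⁻¹)ᵀ := by
    rw [Matrix.transpose_sub, Matrix.transpose_one, Matrix.transpose_mul _ Gᵀ,
      Matrix.transpose_transpose]
  refine ⟨?_, ?_⟩
  · rw [Matrix.mulVec_add, Matrix.mulVec_mulVec, hGP, Matrix.zero_mulVec, zero_add, hlam₀]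
  · generalize (1 - Q * G * (Gᵀ * Q * G)⁻¹ * Gᵀ) = P at *
    -- The residual `d - F λ` is annihilated by `Pᵀ = 1 - G Mᵀ`, where `M = Q G (Gᵀ Q G)⁻¹`.
    have hr : Pᵀ.mulVec (d - F.mulVec (P.mulVec lamBar + lam₀)) = 0 := by
      rw [Matrix.mulVec_add, add_comm, ← sub_sub, Matrix.mulVec_sub, ← hproj,
        Matrix.mulVec_mulVec, Matrix.mulVec_mulVec, Matrix.mul_assoc, sub_self]
    refine ⟨(Q * G * (Gᵀ * Q * G)⁻¹)ᵀ.mulVec (d - F.mulVec (P.mulVec lamBar + lam₀)), ?_⟩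
    rw [hPT, Matrix.sub_mulVec, Matrix.one_mulVec, sub_eq_zero] at hr
    rw [Matrix.mulVec_mulVec, ← hr, add_sub_cancel]
end
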